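/- Let Y₁,…,Yₙ be a stationary (G,θ)-geometrically ergodic hidden Markov chain on ℕ with stationary output distribution ρ, and let ρ̂⁽ⁿ⁾ be the empirical distribution ρ̂⁽ⁿ⁾_y = (1/n)∑_{i=1}^n 1[Y_i = y]. Then for every n ∈ ℕ and ε > 0, P( ‖ρ − ρ̂⁽ⁿ⁾‖_∞ > √((1+2Gθ)/(n(1−θ))) + ε ) ≤ exp(−n(1−θ)²ε²/(2G²)), where ‖·‖_∞ denotes the supremum over coordinates y ∈ ℕ. -/

import Mathlib

open scoped BigOperators
open Filter

noncomputable section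

/-- Total variation distance `‖μ − ν‖_TV = (1/2) ∑ₛ |μ(s) − ν(s)|`. -/
def tv {α : Type*} (μ ν : α → ℝ) : ℝ := (1 / 2) * ∑' s, |μ s - ν s|

/-- Column-stochastic Markov kernel on ℕ: `A y x = A(y|x)`. -/
def IsKernel (A : ℕ → ℕ → ℝ) : Prop :=
  (∀ y x, 0 ≤ A y x) ∧ ∀ x, ∑' y, A y x = 1

/-- Stochastic vector on ℕ. -/
def IsStochastic (ξ : ℕ → ℝ) : Prop := (∀ x, 0 ≤ ξ x) ∧ ∑' x, ξ x = 1

/-- Kernel applied to a vector: `(Aξ)_y = ∑ₓ A(y|x) ξₓ`. -/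
def kerApp (A : ℕ → ℕ → ℝ) (ξ : ℕ → ℝ) : ℕ → ℝ := fun y => ∑' x, A y x * ξ x

/-- Iterated kernel application: `kerIter A s ξ = Aˢ ξ`. -/
def kerIter (A : ℕ → ℕ → ℝ) : ℕ → (ℕ → ℝ) → ℕ → ℝ
  | 0, ξ => ξ
  | s + 1, ξ => kerApp A (kerIter A s ξ)

/-- Point mass at `x`. -/
def dirac (x : ℕ) : ℕ → ℝ := fun y => if y = x then 1 else 0

/-- `(G,θ)`-geometric ergodicity of the kernel `A` with stationary distribution `π`:
`τ_{s+1} = sup_x ‖Aˢ δₓ − π‖_TV ≤ G θˢ` for all `s ≥ 0` (i.e. `τ_s ≤ G θ^{s-1}` for `s ≥ 1`),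
with `1 ≤ G` and `0 ≤ θ < 1`. -/
def IsGeomErgodic (A : ℕ → ℕ → ℝ) (π : ℕ → ℝ) (G θ : ℝ) : Prop :=
  1 ≤ G ∧ 0 ≤ θ ∧ θ < 1 ∧ IsStochastic π ∧ kerApp A π = π ∧
    ∀ (s x : ℕ), tv (kerIter A s (dirac x)) π ≤ G * θ ^ s

/-- Joint law of the Markov chain `(p₁, A)` on `ℕⁿ`. -/
def markovLaw (p : ℕ → ℝ) (A : ℕ → ℕ → ℝ) : (n : ℕ) → (Fin n → ℕ) → ℝ
  | 0, _ => 1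
  | n + 1, x => p (x 0) * ∏ i : Fin n, A (x i.succ) (x i.castSucc)

/-- Joint law of the hidden Markov chain `(p₁, A, B)` on `ℕⁿ`. -/
def hmmLaw (p : ℕ → ℝ) (A B : ℕ → ℕ → ℝ) (n : ℕ) (y : Fin n → ℕ) : ℝ :=
  ∑' x : Fin n → ℕ, markovLaw p A n x * ∏ i : Fin n, B (y i) (x i)

/-- Probability of an event under a law. -/
def prob {α : Type*} (μ : α → ℝ) (S : Set α) : ℝ := ∑' s : S, μ s.1

/-- Expectation of a function under a law. -/
def expect {α : Type*} (μ : α → ℝ) (f : α → ℝ) : ℝ := ∑' s, μ s * f s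

/-- Empirical distribution of a sample `Y ∈ ℕⁿ`. -/
def emp {n : ℕ} (Y : Fin n → ℕ) (v : ℕ) : ℝ :=
  (∑ i : Fin n, if Y i = v then (1 : ℝ) else 0) / n


/-! ### Generic facts about expectations -/

def StLaw {α : Type*} (μ : α → ℝ) : Prop := (∀ a, 0 ≤ μ a) ∧ HasSum μ 1

def BddFn {α : Type*} (g : α → ℝ) : Prop := ∃ C, ∀ a, |g a| ≤ C

section generic
variable {α β : Type*}

lemma IsStochastic.stoch {ξ : ℕ → ℝ} (h : IsStochastic ξ) : StLaw ξ := by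
  refine ⟨h.1, ?_⟩
  have hs : Summable ξ := by
    by_contra hc
    have := tsum_eq_zero_of_not_summable hc
    rw [h.2] at this
    exact one_ne_zero this
  exact h.2 ▸ hs.hasSum

lemma IsKernel.stoch {A : ℕ → ℕ → ℝ} (h : IsKernel A) (x : ℕ) : StLaw (fun y => A y x) :=
  IsStochastic.stoch ⟨fun y => h.1 y x, h.2 x⟩

lemma BddFn.const (c : ℝ) : BddFn (fun _ : α => c) := ⟨|c|, fun _ => le_rfl⟩
lemma BddFn.add {f g : α → ℝ} (hf : BddFn f) (hg : BddFn g) : BddFn (fun a => f a + g a) := by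
  obtain ⟨C, hC⟩ := hf
  obtain ⟨D, hD⟩ := hg
  exact ⟨C + D, fun a => (abs_add_le _ _).trans (add_le_add (hC a) (hD a))⟩
lemma BddFn.mul {f g : α → ℝ} (hf : BddFn f) (hg : BddFn g) : BddFn (fun a => f a * g a) := by
  obtain ⟨C, hC⟩ := hf
  obtain ⟨D, hD⟩ := hg
  refine ⟨C * D, fun a => ?_⟩
  rw [abs_mul]
  exact mul_le_mul (hC a) (hD a) (abs_nonneg _) ((abs_nonneg _).trans (hC a))
lemma BddFn.neg {f : α → ℝ} (hf : BddFn f) : BddFn (fun a => - f a) := by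
  obtain ⟨C, hC⟩ := hf
  exact ⟨C, fun a => by simpa using hC a⟩
lemma BddFn.sub {f g : α → ℝ} (hf : BddFn f) (hg : BddFn g) : BddFn (fun a => f a - g a) := by
  simpa [sub_eq_add_neg] using hf.add hg.neg
lemma BddFn.comp {f : α → ℝ} (hf : BddFn f) (k : β → α) : BddFn (fun b => f (k b)) := by
  obtain ⟨C, hC⟩ := hf
  exact ⟨C, fun a => hC _⟩
lemma BddFn.sum {ι : Type*} (s : Finset ι) {f : ι → α → ℝ} (hf : ∀ i, BddFn (f i)) :
    BddFn (fun a => ∑ i ∈ s, f i a) := by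
  choose C hC using hf
  exact ⟨∑ i ∈ s, C i, fun a => (Finset.abs_sum_le_sum_abs _ _).trans
    (Finset.sum_le_sum fun i _ => hC i a)⟩
lemma BddFn.exp {f : α → ℝ} (hf : BddFn f) : BddFn (fun a => Real.exp (f a)) := by
  obtain ⟨C, hC⟩ := hf
  refine ⟨Real.exp C, fun a => ?_⟩
  rw [abs_of_pos (Real.exp_pos _)]
  exact Real.exp_le_exp.2 ((le_abs_self _).trans (hC a))
lemma BddFn.of_mem {f : α → ℝ} {a b : ℝ} (h : ∀ x, a ≤ f x ∧ f x ≤ b) : BddFn f := by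
  refine ⟨|a| + |b|, fun x => abs_le.2 ⟨?_, ?_⟩⟩
  · have := neg_abs_le a
    have := abs_nonneg b
    linarith [(h x).1]
  · have := le_abs_self b
    have := abs_nonneg a
    linarith [(h x).2]

lemma StLaw.summable_mul {μ : α → ℝ} (hμ : StLaw μ) {g : α → ℝ} (hg : BddFn g) :
    Summable (fun a => μ a * g a) := by
  obtain ⟨C, hC⟩ := hg
  refine Summable.of_norm_bounded (hμ.2.summable.mul_right C) fun a => ?_
  rw [Real.norm_eq_abs, abs_mul, abs_of_nonneg (hμ.1 a)]
  exact mul_le_mul_of_nonneg_left (hC a) (hμ.1 a)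

lemma expect_const {μ : α → ℝ} (hμ : StLaw μ) (c : ℝ) : expect μ (fun _ => c) = c := by
  simp [expect, tsum_mul_right, hμ.2.tsum_eq]

lemma expect_add {μ : α → ℝ} (hμ : StLaw μ) {f g : α → ℝ} (hf : BddFn f) (hg : BddFn g) :
    expect μ (fun a => f a + g a) = expect μ f + expect μ g := by
  simp only [expect, mul_add]
  exact (hμ.summable_mul hf).tsum_add (hμ.summable_mul hg)

lemma expect_sub {μ : α → ℝ} (hμ : StLaw μ) {f g : α → ℝ} (hf : BddFn f) (hg : BddFn g) :
    expect μ (fun a => f a - g a) = expect μ f - expect μ g := by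
  simp only [expect, mul_sub]
  exact (hμ.summable_mul hf).tsum_sub (hμ.summable_mul hg)

lemma expect_mul_right (μ : α → ℝ) (f : α → ℝ) (c : ℝ) :
    expect μ (fun a => f a * c) = expect μ f * c := by
  simp only [expect, ← mul_assoc, tsum_mul_right]

lemma expect_mul_left (μ : α → ℝ) (f : α → ℝ) (c : ℝ) :
    expect μ (fun a => c * f a) = c * expect μ f := by
  simp only [mul_comm c, expect_mul_right]

lemma expect_sum {ι : Type*} (s : Finset ι) {μ : α → ℝ} (hμ : StLaw μ) {f : ι → α → ℝ}
    (hf : ∀ i, BddFn (f i)) :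
    expect μ (fun a => ∑ i ∈ s, f i a) = ∑ i ∈ s, expect μ (f i) := by
  classical
  induction s using Finset.induction_on with
  | empty => simpa using expect_const hμ 0
  | insert i s hi ih =>
    simp only [Finset.sum_insert hi]
    rw [expect_add hμ (hf i) (BddFn.sum s hf), ih]

lemma expect_mono {μ : α → ℝ} (hμ : StLaw μ) {f g : α → ℝ} (hf : BddFn f) (hg : BddFn g)
    (h : ∀ a, f a ≤ g a) : expect μ f ≤ expect μ g :=
  (hμ.summable_mul hf).tsum_le_tsum (fun a => mul_le_mul_of_nonneg_left (h a) (hμ.1 a))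
    (hμ.summable_mul hg)

lemma expect_mem {μ : α → ℝ} (hμ : StLaw μ) {f : α → ℝ} {a b : ℝ}
    (h : ∀ x, a ≤ f x ∧ f x ≤ b) : a ≤ expect μ f ∧ expect μ f ≤ b := by
  have hb := BddFn.of_mem h
  constructor
  · rw [← expect_const hμ a]
    exact expect_mono hμ (BddFn.const a) hb fun x => (h x).1
  · rw [← expect_const hμ b]
    exact expect_mono hμ hb (BddFn.const b) fun x => (h x).2

lemma bdd_expect {κ : β → α → ℝ} (hκ : ∀ b, StLaw (κ b)) {f : β → α → ℝ}
    (hf : BddFn (fun z : β × α => f z.1 z.2)) : BddFn (fun b => expect (κ b) (f b)) := by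
  obtain ⟨C, hC⟩ := hf
  exact BddFn.of_mem fun b => expect_mem (hκ b) fun x => abs_le.1 (hC (b, x))

lemma expect_sq_le {μ : α → ℝ} (hμ : StLaw μ) {f : α → ℝ} (hf : BddFn f) :
    (expect μ f) ^ 2 ≤ expect μ (fun a => f a * f a) := by
  set m := expect μ f with hm
  have h1 : expect μ (fun a => 2 * m * f a - m ^ 2) ≤ expect μ (fun a => f a * f a) := by
    refine expect_mono hμ (((BddFn.const _).mul hf).sub (BddFn.const _)) (hf.mul hf) fun a => ?_
    nlinarith [sq_nonneg (f a - m)]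
  rw [expect_sub hμ ((BddFn.const _).mul hf) (BddFn.const _), expect_const hμ, expect_mul_left,
    ← hm] at h1
  nlinarith

/-- product of a law and a kernel -/
def prodLaw (μ : α → ℝ) (κ : α → β → ℝ) : α × β → ℝ := fun z => μ z.1 * κ z.1 z.2

lemma stoch_prodLaw {μ : α → ℝ} (hμ : StLaw μ) {κ : α → β → ℝ} (hκ : ∀ a, StLaw (κ a)) :
    StLaw (prodLaw μ κ) := by
  have h0 : 0 ≤ prodLaw μ κ := fun z => mul_nonneg (hμ.1 _) ((hκ _).1 _)
  have e : (fun a => ∑' b, prodLaw μ κ (a, b)) = μ := by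
    funext a
    simp [prodLaw, tsum_mul_left, (hκ a).2.tsum_eq]
  have hs : Summable (prodLaw μ κ) := by
    rw [summable_prod_of_nonneg h0]
    refine ⟨fun a => (hκ a).2.summable.mul_left (μ a), ?_⟩
    rw [e]
    exact hμ.2.summable
  refine ⟨h0, ?_⟩
  have : ∑' z, prodLaw μ κ z = 1 := by
    rw [hs.tsum_prod, e, hμ.2.tsum_eq]
  exact this ▸ hs.hasSum

lemma expect_prodLaw {μ : α → ℝ} (hμ : StLaw μ) {κ : α → β → ℝ} (hκ : ∀ a, StLaw (κ a))
    {g : α × β → ℝ} (hg : BddFn g) :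
    expect (prodLaw μ κ) g = expect μ (fun a => expect (κ a) (fun b => g (a, b))) := by
  have hs := (stoch_prodLaw hμ hκ).summable_mul hg
  unfold expect
  rw [hs.tsum_prod]
  congr 1
  funext a
  rw [← tsum_mul_left]
  congr 1
  funext b
  simp only [prodLaw]
  ring

lemma expect_comm {μ : α → ℝ} (hμ : StLaw μ) {ν : β → ℝ} (hν : StLaw ν)
    {g : α → β → ℝ} (hg : BddFn (fun z : α × β => g z.1 z.2)) :
    expect μ (fun a => expect ν (fun b => g a b)) =
      expect ν (fun b => expect μ (fun a => g a b)) := by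
  rw [← expect_prodLaw hμ (κ := fun _ => ν) (fun _ => hν) (g := fun z => g z.1 z.2) hg,
    ← expect_prodLaw hν (κ := fun _ => μ) (fun _ => hμ) (g := fun z => g z.2 z.1)
      (hg.comp Prod.swap)]
  unfold expect
  rw [← (Equiv.prodComm β α).tsum_eq]
  congr 1
  funext z
  simp only [prodLaw, Equiv.prodComm_apply, Prod.fst_swap, Prod.snd_swap]
  ring

/-- second marginal -/
lemma stoch_snd {w : α × β → ℝ} (hw : StLaw w) : StLaw (fun b => ∑' a, w (a, b)) := by
  refine ⟨fun b => tsum_nonneg fun a => hw.1 _, ?_⟩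
  have h2 : HasSum (fun z : β × α => w (z.2, z.1)) 1 := by
    have := (Equiv.prodComm β α).hasSum_iff.2 hw.2
    exact this
  exact h2.prod_fiberwise fun b => (h2.summable.prod_factor b).hasSum

lemma expect_snd {w : α × β → ℝ} (hw : StLaw w) {g : β → ℝ} (hg : BddFn g) :
    expect (fun b => ∑' a, w (a, b)) g = expect w (fun z => g z.2) := by
  have hs := hw.summable_mul (hg.comp Prod.snd)
  have h2 : Summable (fun z : β × α => w (z.2, z.1) * g z.1) :=
    (Equiv.prodComm β α).summable_iff.2 hs
  unfold expect
  rw [← (Equiv.prodComm β α).tsum_eq]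
  refine Eq.trans ?_ h2.tsum_prod.symm
  congr 1
  funext b
  rw [← tsum_mul_right]

lemma stoch_equiv (e : β ≃ α) {μ : α → ℝ} (hμ : StLaw (fun b => μ (e b))) : StLaw μ := by
  refine ⟨fun a => by simpa using hμ.1 (e.symm a), ?_⟩
  exact e.hasSum_iff.1 hμ.2

lemma expect_equiv (e : β ≃ α) (μ : α → ℝ) (g : α → ℝ) :
    expect μ g = expect (fun b => μ (e b)) (fun b => g (e b)) := by
  unfold expect
  rw [← e.tsum_eq]

/-- TV bound -/
lemma expect_sub_le_tv {μ ν : α → ℝ} (hμ : StLaw μ) (hν : StLaw ν) {f : α → ℝ} {L : ℝ}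
    (hf : ∀ a, 0 ≤ f a ∧ f a ≤ L) : expect μ f - expect ν f ≤ L * tv μ ν := by
  have hb := BddFn.of_mem hf
  have hs : Summable (fun a => |μ a - ν a|) := (hμ.2.summable.sub hν.2.summable).abs
  have hd : HasSum (fun a => μ a - ν a) 0 := by simpa using hμ.2.sub hν.2
  have e1 : expect μ f - expect ν f = ∑' a, (μ a - ν a) * (f a - L / 2) := by
    unfold expect
    rw [← (hμ.summable_mul hb).tsum_sub (hν.summable_mul hb)]
    have : (fun a => (μ a - ν a) * (f a - L / 2)) =
        fun a => (μ a * f a - ν a * f a) - (μ a - ν a) * (L / 2) := by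
      funext a; ring
    rw [this, ((hμ.summable_mul hb).sub (hν.summable_mul hb)).tsum_sub
      (hd.summable.mul_right _), tsum_mul_right, hd.tsum_eq]
    ring
  rw [e1]
  have e2 : L * tv μ ν = ∑' a, |μ a - ν a| * (L / 2) := by
    rw [tsum_mul_right, tv]; ring
  rw [e2]
  have hle : ∀ a, |(μ a - ν a) * (f a - L / 2)| ≤ |μ a - ν a| * (L / 2) := fun a => by
    rw [abs_mul]
    refine mul_le_mul_of_nonneg_left (abs_le.2 ⟨?_, ?_⟩) (abs_nonneg _) <;>
      linarith [(hf a).1, (hf a).2]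
  refine Summable.tsum_le_tsum (fun a => (le_abs_self _).trans (hle a)) ?_ (hs.mul_right _)
  exact Summable.of_norm_bounded (hs.mul_right _) hle

lemma tv_triangle {μ ν ξ : α → ℝ} (hμ : StLaw μ) (hν : StLaw ν) (hξ : StLaw ξ) :
    tv μ ν ≤ tv μ ξ + tv ν ξ := by
  unfold tv
  have s1 : Summable (fun a => |μ a - ξ a|) := (hμ.2.summable.sub hξ.2.summable).abs
  have s2 : Summable (fun a => |ν a - ξ a|) := (hν.2.summable.sub hξ.2.summable).abs
  have s3 : Summable (fun a => |μ a - ν a|) := (hμ.2.summable.sub hν.2.summable).abs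
  rw [← mul_add, ← s1.tsum_add s2]
  refine mul_le_mul_of_nonneg_left (s3.tsum_le_tsum (fun a => ?_) (s1.add s2)) (by norm_num)
  rw [abs_sub_comm (ν a)]
  exact abs_sub_le _ _ _

lemma hoeffding [Countable α] {μ : α → ℝ} (hμ : StLaw μ) {F : α → ℝ} (hF : BddFn F)
    {c : ℝ} (hc : ∀ a b, F a - F b ≤ c) (s : ℝ) :
    expect μ (fun a => Real.exp (s * (F a - expect μ F))) ≤ Real.exp (s ^ 2 * c ^ 2 / 8) := by
  classical
  let _ : MeasurableSpace α := ⊤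
  have hp : HasSum (fun a => ENNReal.ofReal (μ a)) 1 := by
    have h := ENNReal.ofReal_tsum_of_nonneg hμ.1 hμ.2.summable
    rw [hμ.2.tsum_eq, ENNReal.ofReal_one] at h
    rw [h]
    exact ENNReal.summable.hasSum
  let P : PMF α := ⟨fun a => ENNReal.ofReal (μ a), hp⟩
  have hint : ∀ g : α → ℝ, BddFn g → ∫ a, g a ∂P.toMeasure = expect μ g := fun g hg => by
    have hi : MeasureTheory.Integrable g P.toMeasure := by
      obtain ⟨C, hC⟩ := hg
      exact MeasureTheory.Integrable.of_bound (measurable_from_top.aestronglyMeasurable) C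
        (Eventually.of_forall hC)
    rw [PMF.integral_eq_tsum P g hi]
    unfold expect
    congr 1
    funext a
    have : (P a).toReal = μ a := ENNReal.toReal_ofReal (hμ.1 a)
    rw [this, smul_eq_mul]
  obtain ⟨C, hC⟩ := id hF
  have hne : Nonempty α := by
    by_contra h
    rw [not_nonempty_iff] at h
    have := hμ.2.tsum_eq
    simp at this
  have bA : BddAbove (Set.range F) := ⟨C, by rintro _ ⟨a, rfl⟩; exact (abs_le.1 (hC a)).2⟩
  have bB : BddBelow (Set.range F) := ⟨-C, by rintro _ ⟨a, rfl⟩; exact (abs_le.1 (hC a)).1⟩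
  have hab : (⨆ a, F a) - (⨅ a, F a) ≤ c := by
    have : ∀ b, (⨆ a, F a) ≤ c + F b := fun b => ciSup_le fun a => by linarith [hc a b]
    have : (⨆ a, F a) - c ≤ ⨅ a, F a := le_ciInf fun b => by linarith [this b]
    linarith
  have hab0 : 0 ≤ (⨆ a, F a) - (⨅ a, F a) :=
    sub_nonneg.2 ((ciInf_le bB hne.some).trans (le_ciSup bA hne.some))
  have key := ProbabilityTheory.hasSubgaussianMGF_of_mem_Icc (μ := P.toMeasure) (X := F)
    (a := ⨅ a, F a) (b := ⨆ a, F a) measurable_from_top.aemeasurable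
    (Eventually.of_forall fun a => ⟨ciInf_le bB a, le_ciSup bA a⟩)
  have k2 := key.mgf_le s
  rw [ProbabilityTheory.mgf, hint F hF, hint _ (((BddFn.const s).mul (hF.sub (BddFn.const _))).exp)]
    at k2
  refine k2.trans (Real.exp_le_exp.2 ?_)
  push_cast
  rw [Real.norm_eq_abs, abs_of_nonneg hab0]
  have : ((⨆ a, F a) - (⨅ a, F a)) ^ 2 ≤ c ^ 2 := pow_le_pow_left₀ hab0 hab 2
  nlinarith [mul_le_mul_of_nonneg_left this (sq_nonneg s)]

end generic

/-! ### The chain -/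

def cn {n : ℕ} (y : ℕ) (ys : Fin n → ℕ) : Fin (n + 1) → ℕ := Fin.cons (α := fun _ => ℕ) y ys

def cnEquiv (n : ℕ) : ℕ × (Fin n → ℕ) ≃ (Fin (n + 1) → ℕ) := Fin.consEquiv (fun _ => ℕ)

lemma cnEquiv_apply {n : ℕ} (z : ℕ × (Fin n → ℕ)) : cnEquiv n z = cn z.1 z.2 := rfl

lemma cn_zero {n : ℕ} (y : ℕ) (ys : Fin n → ℕ) : cn y ys 0 = y := rfl
lemma cn_succ {n : ℕ} (y : ℕ) (ys : Fin n → ℕ) (i : Fin n) : cn y ys i.succ = ys i := rfl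

lemma markovLaw_cn (p : ℕ → ℝ) (A : ℕ → ℕ → ℝ) (n : ℕ) (x : ℕ) (xs : Fin n → ℕ) :
    markovLaw p A (n + 1) (cn x xs) = p x * markovLaw (fun y => A y x) A n xs := by
  cases n with
  | zero => simp [markovLaw, cn_zero]
  | succ n =>
    simp only [markovLaw, cn_zero, cn_succ]
    rw [Fin.prod_univ_succ]
    simp only [cn_succ, Fin.castSucc_zero, cn_zero, Fin.castSucc_succ]

lemma stoch_markovLaw {A : ℕ → ℕ → ℝ} (hA : IsKernel A) (n : ℕ) :
    ∀ p : ℕ → ℝ, StLaw p → StLaw (markovLaw p A n) := by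
  induction n with
  | zero =>
    intro p hp
    refine ⟨fun _ => zero_le_one, ?_⟩
    have := hasSum_unique (markovLaw p A 0)
    simpa [markovLaw] using this
  | succ n ih =>
    intro p hp
    refine stoch_equiv (cnEquiv n) ?_
    have := stoch_prodLaw hp (κ := fun x => markovLaw (fun y => A y x) A n)
      (fun x => ih _ (hA.stoch x))
    convert this using 2 with z
    rw [cnEquiv_apply, markovLaw_cn]
    rfl

lemma kernel_le_one {B : ℕ → ℕ → ℝ} (hB : IsKernel B) (y x : ℕ) : B y x ≤ 1 := by
  have h := hB.stoch x
  exact le_hasSum h.2 y fun b _ => h.1 b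

lemma hmmLaw_cn {A B : ℕ → ℕ → ℝ} (hA : IsKernel A) (hB : IsKernel B) {p : ℕ → ℝ}
    (hp : StLaw p) (n : ℕ) (y : ℕ) (ys : Fin n → ℕ) :
    hmmLaw p A B (n + 1) (cn y ys) =
      ∑' x, p x * (B y x * hmmLaw (fun y => A y x) A B n ys) := by
  unfold hmmLaw
  have hb : BddFn (fun x : Fin (n + 1) → ℕ => ∏ i, B (cn y ys i) (x i)) := by
    refine BddFn.of_mem (a := 0) (b := 1) fun x => ⟨Finset.prod_nonneg fun i _ => hB.1 _ _, ?_⟩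
    exact Finset.prod_le_one (fun i _ => hB.1 _ _) fun i _ => kernel_le_one hB _ _
  have hs := (stoch_markovLaw hA (n + 1) p hp).summable_mul hb
  rw [← (cnEquiv n).tsum_eq]
  have hs' := (cnEquiv n).summable_iff.2 hs
  refine hs'.tsum_prod.trans ?_
  congr 1
  funext x
  rw [← tsum_mul_left, ← tsum_mul_left]
  congr 1
  funext xs
  simp only [Function.comp, cnEquiv_apply]
  rw [markovLaw_cn, Fin.prod_univ_succ]
  simp only [cn_succ, cn_zero]
  ring

lemma hmmLaw_zero (p : ℕ → ℝ) (A B : ℕ → ℕ → ℝ) (y : Fin 0 → ℕ) : hmmLaw p A B 0 y = 1 := by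
  unfold hmmLaw
  rw [tsum_eq_single (default : Fin 0 → ℕ)]
  · simp [markovLaw]
  · intro b hb
    exact absurd (Subsingleton.elim _ _) hb

section chain
variable {A B : ℕ → ℕ → ℝ}

def jointLaw (A B : ℕ → ℕ → ℝ) (p : ℕ → ℝ) (n : ℕ) : ℕ × (ℕ × (Fin n → ℕ)) → ℝ :=
  prodLaw p (fun x => prodLaw (fun y => B y x) (fun _ => hmmLaw (fun y => A y x) A B n))

lemma hmmLaw_joint (hA : IsKernel A) (hB : IsKernel B) {p : ℕ → ℝ}
    (hp : StLaw p) (n : ℕ) :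
    (fun z => hmmLaw p A B (n + 1) (cnEquiv n z)) = fun z => ∑' x, jointLaw A B p n (x, z) := by
  funext z
  rw [cnEquiv_apply, hmmLaw_cn hA hB hp]
  rfl

lemma stoch_hmmLaw (hA : IsKernel A) (hB : IsKernel B) (n : ℕ) :
    ∀ p : ℕ → ℝ, StLaw p → StLaw (hmmLaw p A B n) := by
  induction n with
  | zero =>
    intro p hp
    refine ⟨fun _ => by simp [hmmLaw_zero], ?_⟩
    have := hasSum_unique (hmmLaw p A B 0)
    simpa [hmmLaw_zero] using this
  | succ n ih =>
    intro p hp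
    refine stoch_equiv (cnEquiv n) ?_
    rw [hmmLaw_joint hA hB hp]
    exact stoch_snd (stoch_prodLaw hp fun x => stoch_prodLaw (hB.stoch x) fun _ =>
      ih _ (hA.stoch x))

lemma expect_zero (p : ℕ → ℝ) (g : (Fin 0 → ℕ) → ℝ) :
    expect (hmmLaw p A B 0) g = g default := by
  unfold expect
  rw [tsum_eq_single (default : Fin 0 → ℕ)]
  · simp [hmmLaw_zero]
  · intro b hb
    exact absurd (Subsingleton.elim _ _) hb

lemma expect_succ (hA : IsKernel A) (hB : IsKernel B) {p : ℕ → ℝ}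
    (hp : StLaw p) {n : ℕ} {g : (Fin (n + 1) → ℕ) → ℝ} (hg : BddFn g) :
    expect (hmmLaw p A B (n + 1)) g = expect p (fun x => expect (fun y => B y x)
      (fun y => expect (hmmLaw (fun y => A y x) A B n) (fun ys => g (cn y ys)))) := by
  have hst := fun x => stoch_hmmLaw hA hB n _ (hA.stoch x)
  rw [expect_equiv (cnEquiv n), hmmLaw_joint hA hB hp]
  unfold jointLaw
  rw [expect_snd (stoch_prodLaw hp fun x => stoch_prodLaw (hB.stoch x) fun _ => hst x)
    (hg.comp _)]
  rw [expect_prodLaw hp (fun x => stoch_prodLaw (hB.stoch x) fun _ => hst x)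
    (hg.comp fun z : ℕ × (ℕ × (Fin n → ℕ)) => cnEquiv n z.2)]
  congr 1
  funext x
  rw [expect_prodLaw (hB.stoch x) (fun _ => hst x) (hg.comp (cnEquiv n))]
  rfl

/-- version with a product law for the first step -/
def stepLaw (B : ℕ → ℕ → ℝ) (p : ℕ → ℝ) : ℕ × ℕ → ℝ := prodLaw p (fun x y => B y x)

lemma stoch_stepLaw (hB : IsKernel B) {p : ℕ → ℝ} (hp : StLaw p) : StLaw (stepLaw B p) :=
  stoch_prodLaw hp hB.stoch

lemma expect_step (hA : IsKernel A) (hB : IsKernel B) {p : ℕ → ℝ}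
    (hp : StLaw p) {n : ℕ} {g : (Fin (n + 1) → ℕ) → ℝ} (hg : BddFn g) :
    expect (hmmLaw p A B (n + 1)) g = expect (stepLaw B p)
      (fun z => expect (hmmLaw (fun y => A y z.1) A B n) (fun ys => g (cn z.2 ys))) := by
  rw [expect_succ hA hB hp hg]
  unfold stepLaw
  rw [expect_prodLaw hp hB.stoch]
  exact bdd_expect (κ := fun z : ℕ × ℕ => hmmLaw (fun y => A y z.1) A B n)
    (f := fun z ys => g (cn z.2 ys)) (fun z => stoch_hmmLaw hA hB n _ (hA.stoch z.1))
    (hg.comp fun w : (ℕ × ℕ) × (Fin n → ℕ) => cn w.1.2 w.2)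

lemma kerApp_eq (A : ℕ → ℕ → ℝ) (p : ℕ → ℝ) :
    kerApp A p = fun y => ∑' x, prodLaw p (fun x y => A y x) (x, y) := by
  funext y
  unfold kerApp prodLaw
  congr 1
  funext x
  ring

lemma stoch_kerApp (hA : IsKernel A) {p : ℕ → ℝ} (hp : StLaw p) : StLaw (kerApp A p) := by
  rw [kerApp_eq]
  exact stoch_snd (stoch_prodLaw hp hA.stoch)

lemma expect_kerApp (hA : IsKernel A) {p : ℕ → ℝ} (hp : StLaw p) {u : ℕ → ℝ} (hu : BddFn u) :
    expect (kerApp A p) u = expect p (fun x => expect (fun y => A y x) u) := by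
  rw [kerApp_eq, expect_snd (stoch_prodLaw hp hA.stoch) hu,
    expect_prodLaw hp hA.stoch (hu.comp Prod.snd)]

lemma stoch_kerIter (hA : IsKernel A) {p : ℕ → ℝ} (hp : StLaw p) (s : ℕ) :
    StLaw (kerIter A s p) := by
  induction s with
  | zero => exact hp
  | succ s ih => exact stoch_kerApp hA ih

lemma kerIter_kerApp (A : ℕ → ℕ → ℝ) (p : ℕ → ℝ) (s : ℕ) :
    kerIter A s (kerApp A p) = kerIter A (s + 1) p := by
  induction s with
  | zero => rfl
  | succ s ih =>
    show kerApp A (kerIter A s (kerApp A p)) = kerApp A (kerIter A (s + 1) p)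
    rw [ih]

lemma kerApp_dirac (A : ℕ → ℕ → ℝ) (x : ℕ) : kerApp A (dirac x) = fun y => A y x := by
  funext y
  simp [kerApp, dirac]

/-- mixture -/
lemma expect_mix (hA : IsKernel A) (hB : IsKernel B) {p : ℕ → ℝ}
    (hp : StLaw p) {n : ℕ} {g : (Fin n → ℕ) → ℝ} (hg : BddFn g) :
    expect p (fun x => expect (hmmLaw (fun y => A y x) A B n) g) =
      expect (hmmLaw (kerApp A p) A B n) g := by
  cases n with
  | zero => simp only [expect_zero, expect_const hp]
  | succ n =>
    rw [expect_succ hA hB (stoch_kerApp hA hp) hg, expect_kerApp hA hp]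
    · congr 1
      funext x
      rw [expect_succ hA hB (hA.stoch x) hg]
    · refine bdd_expect (κ := fun x y => B y x) (f := fun x y =>
        expect (hmmLaw (fun y => A y x) A B n) (fun ys => g (cn y ys))) hB.stoch ?_
      exact bdd_expect (κ := fun z : ℕ × ℕ => hmmLaw (fun y => A y z.1) A B n)
        (f := fun z ys => g (cn z.2 ys)) (fun z => stoch_hmmLaw hA hB n _ (hA.stoch z.1))
        (hg.comp fun w : (ℕ × ℕ) × (Fin n → ℕ) => cn w.1.2 w.2)

lemma expect_tail (hA : IsKernel A) (hB : IsKernel B) {p : ℕ → ℝ}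
    (hp : StLaw p) {n : ℕ} {g : (Fin n → ℕ) → ℝ} (hg : BddFn g) :
    expect (hmmLaw p A B (n + 1)) (fun Y => g (fun i => Y i.succ)) =
      expect (hmmLaw (kerApp A p) A B n) g := by
  rw [expect_succ hA hB hp (hg.comp _), ← expect_mix hA hB hp hg]
  congr 1
  funext x
  simp only [cn_succ, expect_const (hB.stoch x)]

/-! ### Lipschitz functions -/

def Lip {n : ℕ} (L : ℝ) (g : (Fin n → ℕ) → ℝ) : Prop :=
  ∀ Y i v, g (Function.update Y i v) ≤ g Y + L

lemma cn_update {n : ℕ} (y : ℕ) (ys : Fin n → ℕ) (i : Fin n) (v : ℕ) :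
    cn y (Function.update ys i v) = Function.update (cn y ys) i.succ v :=
  Fin.cons_update (α := fun _ => ℕ) y ys i v

lemma update_cn_zero {n : ℕ} (y : ℕ) (ys : Fin n → ℕ) (v : ℕ) :
    Function.update (cn y ys) 0 v = cn v ys :=
  Fin.update_cons_zero (α := fun _ => ℕ) y ys v

lemma Lip.cn {n : ℕ} {L : ℝ} {g : (Fin (n + 1) → ℕ) → ℝ} (h : Lip L g) (y : ℕ) :
    Lip L (fun ys => g (cn y ys)) := fun Y i v => by
  simp only [cn_update]
  exact h _ _ _

lemma Lip.cn_le {n : ℕ} {L : ℝ} {g : (Fin (n + 1) → ℕ) → ℝ} (h : Lip L g) (y y' : ℕ)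
    (ys : Fin n → ℕ) : g (_root_.cn y ys) ≤ g (_root_.cn y' ys) + L := by
  have := h (_root_.cn y' ys) 0 y
  rwa [update_cn_zero] at this

lemma diff_le (hA : IsKernel A) (hB : IsKernel B) {L : ℝ} (n : ℕ) :
    ∀ (p q : ℕ → ℝ) (g : (Fin n → ℕ) → ℝ), StLaw p → StLaw q → BddFn g → Lip L g →
    expect (hmmLaw p A B n) g - expect (hmmLaw q A B n) g ≤
      L * ∑ k ∈ Finset.range n, tv (kerIter A k p) (kerIter A k q) := by
  induction n with
  | zero =>
    intro p q g hp hq hg hL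
    simp [expect_zero]
  | succ n ih =>
    intro p q g hp hq hg hL
    obtain ⟨C, hC⟩ := id hg
    let gi : (Fin n → ℕ) → ℝ := fun ys => ⨅ y, g (cn y ys)
    have bb : ∀ ys : Fin n → ℕ, BddBelow (Set.range fun y => g (cn y ys)) := fun ys =>
      ⟨-C, by rintro _ ⟨a, rfl⟩; exact (abs_le.1 (hC _)).1⟩
    have gile : ∀ y ys, gi ys ≤ g (cn y ys) := fun y ys => ciInf_le (bb ys) y
    have legi : ∀ y ys, g (cn y ys) ≤ gi ys + L := fun y ys => by
      have : g (cn y ys) - L ≤ gi ys := le_ciInf fun y' => by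
        have := hL.cn_le y y' ys
        linarith
      linarith
    have hgi : BddFn gi := BddFn.of_mem (a := -C) (b := C) fun ys =>
      ⟨le_ciInf fun y => (abs_le.1 (hC _)).1, (gile 0 ys).trans (abs_le.1 (hC _)).2⟩
    have hLi : Lip L gi := fun Y i v => by
      have : gi (Function.update Y i v) - L ≤ gi Y := le_ciInf fun y => by
        have h1 := gile y (Function.update Y i v)
        have h2 := hL.cn y Y i v
        simp only at h2
        linarith
      linarith
    have hgt : BddFn (fun Y : Fin (n + 1) → ℕ => gi (fun i => Y i.succ)) := hgi.comp _
    have split : ∀ r : ℕ → ℝ, StLaw r → expect (hmmLaw r A B (n + 1)) g =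
        expect (hmmLaw (kerApp A r) A B n) gi +
        expect r (fun x => expect (fun y => B y x)
          (fun y => expect (hmmLaw (fun y => A y x) A B n)
            (fun ys => g (cn y ys) - gi ys))) := fun r hr => by
      rw [← expect_tail hA hB hr hgi]
      have := expect_succ hA hB hr (hg.sub hgt)
      simp only [cn_succ] at this
      rw [← this, expect_sub (stoch_hmmLaw hA hB _ _ hr) hg hgt]
      ring
    rw [split p hp, split q hq, Finset.sum_range_succ']
    have h1 := ih (kerApp A p) (kerApp A q) gi (stoch_kerApp hA hp) (stoch_kerApp hA hq) hgi hLi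
    simp only [kerIter_kerApp] at h1
    have h2 := expect_sub_le_tv (L := L) hp hq (f := fun x => expect (fun y => B y x)
          (fun y => expect (hmmLaw (fun y => A y x) A B n)
            (fun ys => g (cn y ys) - gi ys))) (fun x => expect_mem (hB.stoch x) fun y =>
            expect_mem (stoch_hmmLaw hA hB n _ (hA.stoch x)) fun ys =>
              ⟨by linarith [gile y ys], by linarith [legi y ys]⟩)
    have h3 : tv (kerIter A 0 p) (kerIter A 0 q) = tv p q := rfl
    rw [h3]
    linarith

lemma mgf_bound (hA : IsKernel A) (hB : IsKernel B) {L c : ℝ}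
    (hc : ∀ (m : ℕ) (x x' : ℕ), L + L * ∑ k ∈ Finset.range m,
      tv (kerIter A k (fun y => A y x)) (kerIter A k (fun y => A y x')) ≤ c) (s : ℝ) (n : ℕ) :
    ∀ (p : ℕ → ℝ) (g : (Fin n → ℕ) → ℝ), StLaw p → BddFn g → Lip L g →
    expect (hmmLaw p A B n) (fun Y => Real.exp (s * (g Y - expect (hmmLaw p A B n) g))) ≤
      Real.exp (n * (s ^ 2 * c ^ 2 / 8)) := by
  induction n with
  | zero =>
    intro p g hp hg hL
    simp [expect_zero]
  | succ n ih =>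
    intro p g hp hg hL
    set m := expect (hmmLaw p A B (n + 1)) g with hm
    have hst := fun x => stoch_hmmLaw hA hB n _ (hA.stoch x)
    let F : ℕ × ℕ → ℝ := fun z =>
      expect (hmmLaw (fun y => A y z.1) A B n) (fun ys => g (cn z.2 ys))
    have hgy : ∀ y, BddFn (fun ys : Fin n → ℕ => g (cn y ys)) := fun y => hg.comp _
    have hF : BddFn F := bdd_expect (κ := fun z : ℕ × ℕ => hmmLaw (fun y => A y z.1) A B n)
      (f := fun z ys => g (cn z.2 ys)) (fun z => hst z.1)
      (hg.comp fun w : (ℕ × ℕ) × (Fin n → ℕ) => cn w.1.2 w.2)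
    have hmF : m = expect (stepLaw B p) F := expect_step hA hB hp hg
    have hbe : BddFn (fun Y => Real.exp (s * (g Y - m))) :=
      ((BddFn.const s).mul (hg.sub (BddFn.const m))).exp
    have hbF : BddFn (fun z => Real.exp (s * (F z - m))) :=
      ((BddFn.const s).mul (hF.sub (BddFn.const m))).exp
    rw [expect_step hA hB hp hbe]
    have hosc : ∀ z z', F z - F z' ≤ c := fun z z' => by
      have h1 := diff_le hA hB n _ _ _ (hA.stoch z.1) (hA.stoch z'.1) (hgy z.2) (hL.cn z.2)
      have h2 : expect (hmmLaw (fun y => A y z'.1) A B n) (fun ys => g (cn z.2 ys)) ≤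
          expect (hmmLaw (fun y => A y z'.1) A B n) (fun ys => g (cn z'.2 ys) + L) :=
        expect_mono (hst _) (hgy _) ((hgy _).add (BddFn.const L)) fun ys => hL.cn_le _ _ _
      rw [expect_add (hst _) (hgy _) (BddFn.const L), expect_const (hst _)] at h2
      have h3 := hc n z.1 z'.1
      show expect (hmmLaw (fun y => A y z.1) A B n) (fun ys => g (cn z.2 ys)) -
        expect (hmmLaw (fun y => A y z'.1) A B n) (fun ys => g (cn z'.2 ys)) ≤ c
      linarith
    have hH := hoeffding (stoch_stepLaw hB hp) hF hosc s
    rw [← hmF] at hH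
    have hstep : expect (stepLaw B p) (fun z => expect (hmmLaw (fun y => A y z.1) A B n)
        (fun ys => Real.exp (s * (g (cn z.2 ys) - m)))) ≤
        expect (stepLaw B p) (fun z => Real.exp (n * (s ^ 2 * c ^ 2 / 8)) *
          Real.exp (s * (F z - m))) := by
      refine expect_mono (stoch_stepLaw hB hp) ?_ ((BddFn.const _).mul hbF) fun z => ?_
      · exact bdd_expect (κ := fun z : ℕ × ℕ => hmmLaw (fun y => A y z.1) A B n)
          (f := fun z ys => Real.exp (s * (g (cn z.2 ys) - m))) (fun z => hst z.1)
          (hbe.comp fun w : (ℕ × ℕ) × (Fin n → ℕ) => cn w.1.2 w.2)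
      · have h1 := ih _ _ (hA.stoch z.1) (hgy z.2) (hL.cn z.2)
        have e : (fun ys : Fin n → ℕ => Real.exp (s * (g (cn z.2 ys) - m))) =
            fun ys => Real.exp (s * (g (cn z.2 ys) - F z)) * Real.exp (s * (F z - m)) := by
          funext ys
          rw [← Real.exp_add]
          congr 1
          ring
        rw [e, expect_mul_right]
        exact mul_le_mul_of_nonneg_right h1 (Real.exp_pos _).le
    refine hstep.trans ?_
    rw [expect_mul_left]
    refine (mul_le_mul_of_nonneg_left hH (Real.exp_pos _).le).trans ?_
    rw [← Real.exp_add]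
    apply le_of_eq
    congr 1
    push_cast
    ring

/-! ### Second moment -/

lemma expect_marg (hA : IsKernel A) (hB : IsKernel B) {u : ℕ → ℝ} (hu : BddFn u) (n : ℕ) :
    ∀ p : ℕ → ℝ, StLaw p → expect (hmmLaw p A B n) (fun Y => ∑ i, u (Y i)) =
      ∑ k ∈ Finset.range n, expect (kerIter A k p) (fun x => expect (fun y => B y x) u) := by
  induction n with
  | zero =>
    intro p hp
    simp [expect_zero]
  | succ n ih =>
    intro p hp
    have b1 : BddFn (fun Y : Fin n → ℕ => ∑ i, u (Y i)) := BddFn.sum _ fun i => hu.comp _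
    simp only [Fin.sum_univ_succ]
    rw [expect_add (stoch_hmmLaw hA hB _ _ hp) (hu.comp fun Y : Fin (n + 1) → ℕ => Y 0)
      (b1.comp fun (Y : Fin (n + 1) → ℕ) i => Y i.succ), expect_tail hA hB hp b1,
      expect_succ hA hB hp (hu.comp fun Y : Fin (n + 1) → ℕ => Y 0), ih _ (stoch_kerApp hA hp),
      Finset.sum_range_succ', add_comm]
    simp only [kerIter_kerApp, cn_zero]
    congr 2
    funext x
    congr 1
    funext y
    exact expect_const (stoch_hmmLaw hA hB n _ (hA.stoch x)) _

def ind (a b : ℕ) : ℝ := if a = b then 1 else 0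

lemma ind_mem (a b : ℕ) : 0 ≤ ind a b ∧ ind a b ≤ 1 := by
  unfold ind
  split_ifs <;> norm_num

lemma ind_bdd {α : Type*} (f g : α → ℕ) : BddFn (fun a => ind (f a) (g a)) :=
  BddFn.of_mem fun a => ind_mem _ _

lemma expect_ind (μ : ℕ → ℝ) (y : ℕ) : expect μ (fun v => ind y v) = μ y := by
  simp [expect, ind]

lemma ind_comm (a b : ℕ) : ind a b = ind b a := by
  simp [ind, eq_comm]

lemma kernel_bdd {α : Type*} (hB : IsKernel B) (f g : α → ℕ) : BddFn (fun a => B (f a) (g a)) :=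
  BddFn.of_mem fun _ => ⟨hB.1 _ _, kernel_le_one hB _ _⟩

lemma kerApp_expect (B : ℕ → ℕ → ℝ) (p : ℕ → ℝ) (y : ℕ) :
    kerApp B p y = expect p (fun x => B y x) := by
  unfold kerApp expect
  congr 1
  funext x
  ring

lemma rho_mem (hB : IsKernel B) {p : ℕ → ℝ} (hp : StLaw p) (y : ℕ) :
    0 ≤ kerApp B p y ∧ kerApp B p y ≤ 1 := by
  rw [kerApp_expect]
  exact expect_mem hp fun x => ⟨hB.1 _ _, kernel_le_one hB _ _⟩

lemma geomSum_le {θ : ℝ} (h0 : 0 ≤ θ) (h1 : θ < 1) (n : ℕ) :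
    ∑ k ∈ Finset.range n, θ ^ (k + 1) ≤ θ / (1 - θ) := by
  have h2 : 0 < 1 - θ := by linarith
  rw [le_div_iff₀ h2]
  have : (∑ k ∈ Finset.range n, θ ^ (k + 1)) * (1 - θ) = θ * (1 - θ ^ n) := by
    induction n with
    | zero => simp
    | succ n ih => rw [Finset.sum_range_succ, add_mul, ih]; ring
  rw [this]
  nlinarith [pow_nonneg h0 n]

lemma tv_iter {π : ℕ → ℝ} {G θ : ℝ} (hge : IsGeomErgodic A π G θ) (k x : ℕ) :
    tv (kerIter A k (fun y => A y x)) π ≤ G * θ ^ (k + 1) := by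
  rw [← kerApp_dirac A x, kerIter_kerApp]
  exact hge.2.2.2.2.2 (k + 1) x

lemma cross_le (hA : IsKernel A) (hB : IsKernel B) {π : ℕ → ℝ} {G θ : ℝ}
    (hge : IsGeomErgodic A π G θ) (n : ℕ) :
    expect (hmmLaw π A B (n + 1)) (fun Y => ∑ j : Fin n, ind (Y 0) (Y j.succ)) ≤
      n * expect π (fun x => expect (fun y => B y x) (kerApp B π)) + G * (θ / (1 - θ)) := by
  obtain ⟨hG, h0, h1, hπ', -, -⟩ := id hge
  have hπ := hπ'.stoch
  have hst := fun x => stoch_hmmLaw hA hB n _ (hA.stoch x)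
  have hρ : BddFn (kerApp B π) := BddFn.of_mem (rho_mem hB hπ)
  have hb : BddFn (fun Y : Fin (n + 1) → ℕ => ∑ j : Fin n, ind (Y 0) (Y j.succ)) :=
    BddFn.sum _ fun j => ind_bdd _ _
  have hbr : BddFn (fun x => expect (fun y => B y x) (kerApp B π)) :=
    BddFn.of_mem fun x => expect_mem (hB.stoch x) (rho_mem hB hπ)
  rw [expect_succ hA hB hπ hb, ← expect_mul_left, ← expect_const hπ (G * (θ / (1 - θ))),
    ← expect_add hπ ((BddFn.const _).mul hbr) (BddFn.const _)]
  refine expect_mono hπ ?_ (((BddFn.const _).mul hbr).add (BddFn.const _)) fun x => ?_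
  · refine bdd_expect (κ := fun x y => B y x) (f := fun x y => expect
      (hmmLaw (fun y => A y x) A B n)
      (fun ys => ∑ j : Fin n, ind (cn y ys 0) (cn y ys j.succ))) hB.stoch ?_
    exact bdd_expect (κ := fun z : ℕ × ℕ => hmmLaw (fun y => A y z.1) A B n)
      (f := fun z ys => ∑ j : Fin n, ind (cn z.2 ys 0) (cn z.2 ys j.succ)) (fun z => hst z.1)
      (hb.comp fun w : (ℕ × ℕ) × (Fin n → ℕ) => cn w.1.2 w.2)
  · simp only [cn_zero, cn_succ]
    have hq := fun k => stoch_kerIter hA (hA.stoch x) k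
    have e1 : ∀ y, expect (hmmLaw (fun y => A y x) A B n) (fun ys => ∑ j, ind y (ys j)) =
        ∑ k ∈ Finset.range n, expect (kerIter A k (fun y => A y x)) (fun x' => B y x') :=
      fun y => by
        rw [expect_marg hA hB (u := fun v => ind y v) (ind_bdd _ _) n _ (hA.stoch x)]
        simp only [expect_ind]
    simp only [e1]
    rw [expect_sum _ (hB.stoch x) (f := fun k y =>
      expect (kerIter A k (fun y => A y x)) (fun x' => B y x'))]
    swap
    · exact fun k => BddFn.of_mem fun y => expect_mem (hq k) fun x' =>
        ⟨hB.1 _ _, kernel_le_one hB _ _⟩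
    have e2 : expect (fun y => B y x) (kerApp B π) =
        expect π (fun x' => expect (fun y => B y x) (fun y => B y x')) := by
      rw [← expect_comm (hB.stoch x) hπ (g := fun y x' => B y x') (kernel_bdd hB _ _)]
      congr 1
      funext y
      exact kerApp_expect B π y
    have e3 : ∀ k, expect (fun y => B y x) (fun y =>
        expect (kerIter A k (fun y => A y x)) (fun x' => B y x')) ≤
        expect (fun y => B y x) (kerApp B π) + G * θ ^ (k + 1) := fun k => by
      rw [expect_comm (hB.stoch x) (hq k) (g := fun y x' => B y x') (kernel_bdd hB _ _), e2]
      have h := expect_sub_le_tv (L := 1) (hq k) hπ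
        (f := fun x' => expect (fun y => B y x) (fun y => B y x')) (fun x' =>
          expect_mem (hB.stoch x) fun y => ⟨hB.1 _ _, kernel_le_one hB _ _⟩)
      linarith [tv_iter hge k x]
    refine (Finset.sum_le_sum fun k _ => e3 k).trans ?_
    rw [Finset.sum_add_distrib, ← Finset.mul_sum, Finset.sum_const, Finset.card_range,
      nsmul_eq_mul]
    have := mul_le_mul_of_nonneg_left (geomSum_le h0 h1 n) (by linarith : (0 : ℝ) ≤ G)
    linarith

lemma pair_le (hA : IsKernel A) (hB : IsKernel B) {π : ℕ → ℝ} {G θ : ℝ}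
    (hge : IsGeomErgodic A π G θ) (n : ℕ) :
    expect (hmmLaw π A B n) (fun Y => ∑ i, ∑ j, ind (Y i) (Y j)) ≤
      n ^ 2 * expect π (fun x => expect (fun y => B y x) (kerApp B π))
        + n * (1 + 2 * (G * (θ / (1 - θ)))) := by
  obtain ⟨hG, h0, h1, hπ', hfix, -⟩ := id hge
  have hπ := hπ'.stoch
  have hr : 0 ≤ expect π (fun x => expect (fun y => B y x) (kerApp B π)) :=
    (expect_mem hπ fun x => expect_mem (hB.stoch x) (rho_mem hB hπ)).1
  induction n with
  | zero => simp [expect_zero]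
  | succ n ih =>
    have hst := stoch_hmmLaw hA hB (n + 1) _ hπ
    have b1 : BddFn (fun Y : Fin (n + 1) → ℕ => ∑ j : Fin n, ind (Y 0) (Y j.succ)) :=
      BddFn.sum _ fun j => ind_bdd _ _
    have b2 : BddFn (fun Y : Fin n → ℕ => ∑ i, ∑ j, ind (Y i) (Y j)) :=
      BddFn.sum _ fun i => BddFn.sum _ fun j => ind_bdd _ _
    have e : (fun Y : Fin (n + 1) → ℕ => ∑ i, ∑ j, ind (Y i) (Y j)) = fun Y =>
        (1 + 2 * ∑ j : Fin n, ind (Y 0) (Y j.succ)) +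
          ∑ i : Fin n, ∑ j : Fin n, ind (Y i.succ) (Y j.succ) := by
      funext Y
      simp only [Fin.sum_univ_succ, Finset.sum_add_distrib]
      have h1 : ind (Y 0) (Y 0) = 1 := by simp [ind]
      have h2 : ∑ i : Fin n, ind (Y i.succ) (Y 0) = ∑ i : Fin n, ind (Y 0) (Y i.succ) :=
        Finset.sum_congr rfl fun i _ => ind_comm _ _
      rw [h1, h2]
      ring
    rw [e, expect_add hst ((BddFn.const 1).add ((BddFn.const 2).mul b1))
      (b2.comp fun (Y : Fin (n + 1) → ℕ) i => Y i.succ),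
      expect_add hst (BddFn.const 1) ((BddFn.const 2).mul b1), expect_const hst,
      expect_mul_left, expect_tail hA hB hπ b2, hfix]
    have := cross_le hA hB hge n
    push_cast
    nlinarith

def supDev (B : ℕ → ℕ → ℝ) (π : ℕ → ℝ) (n : ℕ) (Y : Fin n → ℕ) : ℝ :=
  ⨆ v : ℕ, |kerApp B π v - emp Y v|

lemma emp_mem {n : ℕ} (Y : Fin n → ℕ) (v : ℕ) : 0 ≤ emp Y v ∧ emp Y v ≤ 1 := by
  unfold emp
  constructor
  · exact div_nonneg (Finset.sum_nonneg fun i _ => (ind_mem (Y i) v).1) (Nat.cast_nonneg n)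
  · apply div_le_one_of_le₀ _ (Nat.cast_nonneg n)
    have := Finset.sum_le_sum fun i (_ : i ∈ Finset.univ) => (ind_mem (Y i) v).2
    simpa [ind] using this

lemma dev_le (hB : IsKernel B) {π : ℕ → ℝ} (hπ : StLaw π) {n : ℕ} (Y : Fin n → ℕ) (v : ℕ) :
    |kerApp B π v - emp Y v| ≤ 1 := by
  have h1 := rho_mem hB hπ v
  have h2 := emp_mem Y v
  rw [abs_le]
  constructor <;> linarith [h1.1, h1.2, h2.1, h2.2]

lemma le_supDev (hB : IsKernel B) {π : ℕ → ℝ} (hπ : StLaw π) {n : ℕ} (Y : Fin n → ℕ) (v : ℕ) :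
    |kerApp B π v - emp Y v| ≤ supDev B π n Y :=
  le_ciSup (f := fun v => |kerApp B π v - emp Y v|)
    ⟨1, by rintro _ ⟨v, rfl⟩; exact dev_le hB hπ Y v⟩ v

lemma supDev_mem (hB : IsKernel B) {π : ℕ → ℝ} (hπ : StLaw π) {n : ℕ} (Y : Fin n → ℕ) :
    0 ≤ supDev B π n Y ∧ supDev B π n Y ≤ 1 :=
  ⟨(abs_nonneg _).trans (le_supDev hB hπ Y 0), ciSup_le fun v => dev_le hB hπ Y v⟩

lemma supDev_lip (hB : IsKernel B) {π : ℕ → ℝ} (hπ : StLaw π) {n : ℕ} :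
    Lip (1 / (n : ℝ)) (supDev B π n) := fun Y i v => by
  refine ciSup_le fun w => ?_
  have h1 := le_supDev hB hπ Y w
  have h2 : |emp Y w - emp (Function.update Y i v) w| ≤ 1 / n := by
    unfold emp
    rw [← sub_div, abs_div, Nat.abs_cast]
    refine div_le_div_of_nonneg_right ?_ (Nat.cast_nonneg n)
    rw [← Finset.sum_sub_distrib, Finset.sum_eq_single i]
    · rw [Function.update_self]
      split_ifs <;> norm_num
    · intro j _ hj
      rw [Function.update_of_ne hj, sub_self]
    · simp
  have h3 := abs_sub_le (kerApp B π w) (emp Y w) (emp (Function.update Y i v) w)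
  linarith

lemma dev_sq_le (hB : IsKernel B) {π : ℕ → ℝ} (hπ : StLaw π) {n : ℕ} (Y : Fin n → ℕ) (v : ℕ) :
    (kerApp B π v - emp Y v) ^ 2 ≤ expect (kerApp B π) (kerApp B π)
      - 2 / n * ∑ i, kerApp B π (Y i) + 1 / n ^ 2 * ∑ i, ∑ j, ind (Y i) (Y j) := by
  set ρ := kerApp B π with hρd
  have hρ : StLaw ρ := stoch_kerApp hB hπ
  have hb : BddFn ρ := BddFn.of_mem (rho_mem hB hπ)
  have s1 : HasSum (fun v => ρ v * ρ v) (expect ρ ρ) := (hρ.summable_mul hb).hasSum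
  have s2 : HasSum (fun v => ∑ i, ind (Y i) v * ρ v) (∑ i, ρ (Y i)) := by
    refine hasSum_sum fun i _ => ?_
    have := hasSum_single (f := fun v => ind (Y i) v * ρ v) (Y i) (fun b hb => by
      simp [ind, hb.symm])
    simpa [ind] using this
  have s3 : HasSum (fun v => ∑ i, ∑ j, ind (Y i) v * ind (Y j) v)
      (∑ i, ∑ j, ind (Y i) (Y j)) := by
    refine hasSum_sum fun i _ => hasSum_sum fun j _ => ?_
    have := hasSum_single (f := fun v => ind (Y i) v * ind (Y j) v) (Y i) (fun b hb => by
      simp [ind, hb.symm])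
    rw [ind_comm (Y i) (Y j)]
    simpa [ind] using this
  have s := (s1.sub (s2.mul_left (2 / (n : ℝ)))).add (s3.mul_left (1 / (n : ℝ) ^ 2))
  have e : (fun v => ρ v * ρ v - 2 / (n : ℝ) * ∑ i, ind (Y i) v * ρ v +
      1 / (n : ℝ) ^ 2 * ∑ i, ∑ j, ind (Y i) v * ind (Y j) v) =
      fun v => (ρ v - emp Y v) ^ 2 := by
    funext v
    have : emp Y v = (∑ i, ind (Y i) v) / n := rfl
    rw [this, ← Finset.sum_mul, ← Finset.sum_mul_sum]
    ring
  rw [e] at s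
  exact le_hasSum s v fun b _ => sq_nonneg _

lemma expect_supDev_le (hA : IsKernel A) (hB : IsKernel B) {π : ℕ → ℝ} {G θ : ℝ}
    (hge : IsGeomErgodic A π G θ) {n : ℕ} (hn : 0 < n) :
    expect (hmmLaw π A B n) (supDev B π n) ≤
      Real.sqrt ((1 + 2 * G * θ) / (n * (1 - θ))) := by
  obtain ⟨hG, h0, h1, hπ', hfix, -⟩ := id hge
  have hπ := hπ'.stoch
  have hst := stoch_hmmLaw hA hB n _ hπ
  have hn' : (0 : ℝ) < n := Nat.cast_pos.2 hn
  have hρ : BddFn (kerApp B π) := BddFn.of_mem (rho_mem hB hπ)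
  have hf : BddFn (supDev B π n) := BddFn.of_mem fun Y => supDev_mem hB hπ Y
  apply Real.le_sqrt_of_sq_le
  refine (expect_sq_le hst hf).trans ?_
  have b1 : BddFn (fun Y : Fin n → ℕ => ∑ i, kerApp B π (Y i)) := BddFn.sum _ fun i => hρ.comp _
  have b2 : BddFn (fun Y : Fin n → ℕ => ∑ i, ∑ j, ind (Y i) (Y j)) :=
    BddFn.sum _ fun i => BddFn.sum _ fun j => ind_bdd _ _
  have b1' : BddFn (fun Y : Fin n → ℕ => 2 / (n : ℝ) * ∑ i, kerApp B π (Y i)) :=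
    (BddFn.const _).mul b1
  have b2' : BddFn (fun Y : Fin n → ℕ => 1 / (n : ℝ) ^ 2 * ∑ i, ∑ j, ind (Y i) (Y j)) :=
    (BddFn.const _).mul b2
  have b0 : BddFn (fun _ : Fin n → ℕ => expect (kerApp B π) (kerApp B π)) := BddFn.const _
  have h2 := expect_mono hst (hf.mul hf) ((b0.sub b1').add b2') (fun Y => by
    set q := expect (kerApp B π) (kerApp B π) - 2 / (n : ℝ) * ∑ i, kerApp B π (Y i) +
      1 / (n : ℝ) ^ 2 * ∑ i, ∑ j, ind (Y i) (Y j) with hq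
    have hq0 : 0 ≤ q := (sq_nonneg _).trans (dev_sq_le hB hπ Y 0)
    have : supDev B π n Y ≤ Real.sqrt q := ciSup_le fun v =>
      Real.abs_le_sqrt (dev_sq_le hB hπ Y v)
    rw [← Real.mul_self_sqrt hq0]
    exact mul_self_le_mul_self (supDev_mem hB hπ Y).1 this)
  refine h2.trans ?_
  have hit : ∀ k, kerIter A k π = π := fun k => by
    induction k with
    | zero => rfl
    | succ k ih => show kerApp A (kerIter A k π) = π; rw [ih, hfix]
  rw [expect_add hst (b0.sub b1') b2', expect_sub hst b0 b1', expect_const hst,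
    expect_mul_left, expect_mul_left, expect_marg hA hB hρ n π hπ, expect_kerApp hB hπ hρ]
  simp only [hit, Finset.sum_const, Finset.card_range, nsmul_eq_mul]
  have h3 := pair_le hA hB hge n
  set r := expect π (fun x => expect (fun y => B y x) (kerApp B π))
  have h4 := mul_le_mul_of_nonneg_left h3 (by positivity : 0 ≤ 1 / (n : ℝ) ^ 2)
  have h5 : r - 2 / (n : ℝ) * (n * r) + 1 / (n : ℝ) ^ 2 *
      (n ^ 2 * r + n * (1 + 2 * (G * (θ / (1 - θ))))) =
      (1 + 2 * (G * (θ / (1 - θ)))) / n := by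
    field_simp
    ring
  have h6 : (1 + 2 * (G * (θ / (1 - θ)))) / n ≤ (1 + 2 * G * θ) / (n * (1 - θ)) := by
    have h7 : 0 < 1 - θ := by linarith
    rw [mul_comm (n : ℝ), ← div_div]
    refine div_le_div_of_nonneg_right ?_ hn'.le
    rw [le_div_iff₀ h7]
    have : θ / (1 - θ) * (1 - θ) = θ := div_mul_cancel₀ _ h7.ne'
    nlinarith
  linarith

end chain

/-- **Theorem 2 (DKW-type inequality).** For a stationary `(G,θ)`-geometrically ergodic hidden
Markov chain with stationary output distribution `ρ = Bπ` and empirical distribution `ρ̂⁽ⁿ⁾`,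
`P(‖ρ − ρ̂⁽ⁿ⁾‖_∞ > √((1+2Gθ)/(n(1−θ))) + ε) ≤ exp(−n(1−θ)²ε²/(2G²))`. -/
theorem dkw_type (G θ : ℝ) (π : ℕ → ℝ) (A B : ℕ → ℕ → ℝ)
    (hA : IsKernel A) (hB : IsKernel B) (hge : IsGeomErgodic A π G θ)
    (n : ℕ) (hn : 0 < n) (ε : ℝ) (hε : 0 < ε) :
    prob (hmmLaw π A B n)
        {Y | (⨆ v : ℕ, |kerApp B π v - emp Y v|)
              > Real.sqrt ((1 + 2 * G * θ) / (n * (1 - θ))) + ε}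
      ≤ Real.exp (-(n * (1 - θ) ^ 2 * ε ^ 2) / (2 * G ^ 2)) := by
  obtain ⟨hG, h0, h1, hπ', hfix, -⟩ := id hge
  have hπ := hπ'.stoch
  have hst := stoch_hmmLaw hA hB n _ hπ
  have hn' : (0 : ℝ) < n := Nat.cast_pos.2 hn
  have h7 : 0 < 1 - θ := by linarith
  have hG0 : 0 < G := by linarith
  have hf : BddFn (supDev B π n) := BddFn.of_mem fun Y => supDev_mem hB hπ Y
  set r := Real.sqrt ((1 + 2 * G * θ) / (n * (1 - θ))) with hr
  set m := expect (hmmLaw π A B n) (supDev B π n) with hm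
  have hmr : m ≤ r := expect_supDev_le hA hB hge hn
  set c : ℝ := 2 * G / (n * (1 - θ)) with hc
  have hc0 : 0 < c := by positivity
  have hosc : ∀ (k : ℕ) (x x' : ℕ), 1 / (n : ℝ) + 1 / (n : ℝ) * ∑ k ∈ Finset.range k,
      tv (kerIter A k (fun y => A y x)) (kerIter A k (fun y => A y x')) ≤ c := by
    intro N x x'
    have s1 : ∑ k ∈ Finset.range N,
        tv (kerIter A k (fun y => A y x)) (kerIter A k (fun y => A y x')) ≤
        2 * G * (θ / (1 - θ)) := by
      refine (Finset.sum_le_sum (g := fun k => 2 * G * θ ^ (k + 1)) fun k _ => ?_).trans ?_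
      · have := tv_triangle (stoch_kerIter hA (hA.stoch x) k)
          (stoch_kerIter hA (hA.stoch x') k) hπ
        linarith [tv_iter hge k x, tv_iter hge k x']
      · rw [← Finset.mul_sum]
        exact mul_le_mul_of_nonneg_left (geomSum_le h0 h1 N) (by positivity)
    have s2 := mul_le_mul_of_nonneg_left s1 (by positivity : 0 ≤ 1 / (n : ℝ))
    have s3 : 1 / (n : ℝ) + 1 / (n : ℝ) * (2 * G * (θ / (1 - θ))) =
        (1 - θ + 2 * G * θ) / (n * (1 - θ)) := by
      field_simp
    have s4 : (1 - θ + 2 * G * θ) / (n * (1 - θ)) ≤ c := by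
      refine div_le_div_of_nonneg_right ?_ (by positivity)
      nlinarith
    linarith
  set s : ℝ := 4 * ε / (n * c ^ 2) with hs
  have hs0 : 0 < s := by positivity
  have hmgf := mgf_bound hA hB hosc s n π _ hπ hf (supDev_lip hB hπ)
  rw [← hm] at hmgf
  have hbe : BddFn (fun Y => Real.exp (s * (supDev B π n Y - m))) :=
    ((BddFn.const s).mul (hf.sub (BddFn.const m))).exp
  set S : Set (Fin n → ℕ) := {Y | (⨆ v : ℕ, |kerApp B π v - emp Y v|) > r + ε} with hS
  have hp : prob (hmmLaw π A B n) S ≤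
      expect (hmmLaw π A B n) (fun Y => Real.exp (-(s * ε)) *
        Real.exp (s * (supDev B π n Y - m))) := by
    unfold prob
    rw [tsum_subtype S (hmmLaw π A B n)]
    refine (hst.2.summable.indicator S).tsum_le_tsum (fun Y => ?_)
      (hst.summable_mul ((BddFn.const _).mul hbe))
    by_cases hY : Y ∈ S
    · rw [Set.indicator_of_mem hY]
      have hY' : supDev B π n Y > r + ε := hY
      refine le_mul_of_one_le_right (hst.1 Y) ?_
      show 1 ≤ Real.exp (-(s * ε)) * Real.exp (s * (supDev B π n Y - m))
      rw [← Real.exp_add]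
      apply Real.one_le_exp
      have : 0 ≤ s * (supDev B π n Y - m - ε) := mul_nonneg hs0.le (by linarith)
      linarith
    · rw [Set.indicator_of_notMem hY]
      exact mul_nonneg (hst.1 Y) (by positivity)
  refine hp.trans ?_
  rw [expect_mul_left]
  refine (mul_le_mul_of_nonneg_left hmgf (Real.exp_pos _).le).trans ?_
  rw [← Real.exp_add]
  apply le_of_eq
  congr 1
  rw [hs, hc]
  field_simp
  ring

end
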